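/- Let R > 0 and β < 0. Then: (i) for every x ∈ ℝ⁵ with x₁² + x₂² − x₃² − x₄² − x₅² = R², one has 2β((x₁+x₄)² + (x₂+x₃)²) − β²(R² + x₅²) < −β²R²; and (ii) the inequality 1 + 2β((x₁+x₄)² + (x₂+x₃)²) − β²(R² + x₅²) < 0 holds for every such x if and only if β²R² ≥ 1. -/

import Mathlib

/-!
In the null coordinates `x₁ + x₄` and `x₂ + x₃` the squared norm of `λ₈` is `-β²R²` minus
nonnegative terms. On the quadric the two null coordinates cannot vanish together, since that
would force `-x₅² = R²`; hence `-β²R²` is never attained. It is however approached along the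
curve `x₁ + x₄ = t`, `x₁ - x₄ = R²/t`, `x₂ = x₃ = x₅ = 0` as `t → 0`, so it is the supremum, and
a set of values not containing its supremum lies strictly below `-1` exactly when the supremum is
at most `-1`.
-/

theorem forall_lt_iff_of_isLUB_of_notMem {α : Type*} [PartialOrder α] {s : Set α} {a c : α}
    (hs : IsLUB s a) (ha : a ∉ s) : (∀ b ∈ s, b < c) ↔ a ≤ c :=
  ⟨fun h ↦ hs.2 fun b hb ↦ (h b hb).le,
    fun hac _ hb ↦ ((hs.1 hb).lt_of_ne (ne_of_mem_of_not_mem hb ha)).trans_le hac⟩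

theorem exists_pos_pow_lt {𝕜 : Type*} [Semiring 𝕜] [LinearOrder 𝕜] [IsStrictOrderedRing 𝕜]
    [DenselyOrdered 𝕜] {n : ℕ} (hn : n ≠ 0) {ε : 𝕜} (hε : 0 < ε) : ∃ t, 0 < t ∧ t ^ n < ε := by
  obtain ⟨t, ht, ht_lt⟩ := exists_between (lt_min hε one_pos)
  obtain ⟨ht_lt_ε, ht_lt_one⟩ := lt_min_iff.mp ht_lt
  exact ⟨t, ht, (pow_le_of_le_one ht.le ht_lt_one.le hn).trans_lt ht_lt_ε⟩

theorem add_sq_add_add_sq_pos_of_ne {𝕜 : Type*} [CommRing 𝕜] [LinearOrder 𝕜]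
    [IsStrictOrderedRing 𝕜] {a b c d : 𝕜} (h : a ^ 2 + b ^ 2 ≠ c ^ 2 + d ^ 2) :
    0 < (a + d) ^ 2 + (b + c) ^ 2 := by
  refine (by positivity : 0 ≤ (a + d) ^ 2 + (b + c) ^ 2).lt_of_ne' fun h_zero ↦ h ?_
  rw [add_eq_zero_iff_of_nonneg (sq_nonneg _) (sq_nonneg _), sq_eq_zero_iff, sq_eq_zero_iff]
    at h_zero
  linear_combination (a - d) * h_zero.1 + (b - c) * h_zero.2

section Field

variable {𝕜 : Type*} [Field 𝕜]

/-- The AdS quadric of radius `R`, for the form of signature `(2, 3)` with the two timelike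
coordinates first. Indices start at `0`: the paper's `xᵢ` is `x (i - 1)`. -/
def adsQuadric (R : 𝕜) : Set (Fin 5 → 𝕜) :=
  {x | x 0 ^ 2 + x 1 ^ 2 - x 2 ^ 2 - x 3 ^ 2 - x 4 ^ 2 = R ^ 2}

/-- The squared norm of the Killing vector `λ₈`, in the form it takes after simplification by the
equation of `adsQuadric R`; it has this meaning only on that quadric. -/
def lambda8NormSq (R β : 𝕜) (x : Fin 5 → 𝕜) : 𝕜 :=
  2 * β * ((x 0 + x 3) ^ 2 + (x 1 + x 2) ^ 2) - β ^ 2 * (R ^ 2 + x 4 ^ 2)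

/-- The point of `adsQuadric R` with `x₁ + x₄ = t`, `x₁ - x₄ = R² / t` and the other coordinates
zero. For `R > 0`, as `t > 0` varies, it runs through the orbit of `(R, 0, 0, 0, 0)` under the
boosts in the `(x₁, x₄)`-plane; the value at `t = 0` is junk. -/
def boostOrbit (R t : 𝕜) : Fin 5 → 𝕜 :=
  ![(t + R ^ 2 / t) / 2, 0, 0, (t - R ^ 2 / t) / 2, 0]

section NeZeroTwo

variable [NeZero (2 : 𝕜)]

theorem boostOrbit_mem_adsQuadric (R : 𝕜) {t : 𝕜} (ht : t ≠ 0) :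
    boostOrbit R t ∈ adsQuadric R := by
  simp only [adsQuadric, boostOrbit, Set.mem_ofPred_eq, Matrix.cons_val]
  field_simp
  ring

theorem lambda8NormSq_boostOrbit (R β t : 𝕜) :
    lambda8NormSq R β (boostOrbit R t) = 2 * β * t ^ 2 - β ^ 2 * R ^ 2 := by
  have null_coordinate : (t + R ^ 2 / t) / 2 + (t - R ^ 2 / t) / 2 = t := by
    rw [← add_div, add_add_sub_cancel, add_self_div_two]
  simp only [lambda8NormSq, boostOrbit, Matrix.cons_val, null_coordinate]
  ring

end NeZeroTwo

variable [LinearOrder 𝕜] [IsStrictOrderedRing 𝕜] {R β : 𝕜}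

theorem lambda8NormSq_lt (hR : R ≠ 0) (hβ : β < 0) {x : Fin 5 → 𝕜} (hx : x ∈ adsQuadric R) :
    lambda8NormSq R β x < -(β ^ 2 * R ^ 2) := by
  have timelike_ne_spacelike : x 0 ^ 2 + x 1 ^ 2 ≠ x 2 ^ 2 + x 3 ^ 2 := by
    have : 0 < R ^ 2 + x 4 ^ 2 := by positivity
    rw [adsQuadric, Set.mem_ofPred_eq] at hx
    exact ne_of_gt (by linarith)
  have null_term_neg : β * ((x 0 + x 3) ^ 2 + (x 1 + x 2) ^ 2) < 0 :=
    mul_neg_of_neg_of_pos hβ (add_sq_add_add_sq_pos_of_ne timelike_ne_spacelike)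
  calc lambda8NormSq R β x
      = 2 * (β * ((x 0 + x 3) ^ 2 + (x 1 + x 2) ^ 2)) - (β * x 4) ^ 2 - β ^ 2 * R ^ 2 := by
        rw [lambda8NormSq]; ring
    _ < -(β ^ 2 * R ^ 2) := by linarith [sq_nonneg (β * x 4)]

theorem notMem_image_lambda8NormSq (hR : R ≠ 0) (hβ : β < 0) :
    -(β ^ 2 * R ^ 2) ∉ lambda8NormSq R β '' adsQuadric R :=
  fun ⟨_, hx, h⟩ ↦ (lambda8NormSq_lt hR hβ hx).ne h

theorem isLUB_image_lambda8NormSq (hR : R ≠ 0) (hβ : β < 0) :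
    IsLUB (lambda8NormSq R β '' adsQuadric R) (-(β ^ 2 * R ^ 2)) := by
  refine ⟨Set.forall_mem_image.mpr fun x hx ↦ (lambda8NormSq_lt hR hβ hx).le,
    fun b hb ↦ le_of_forall_lt fun c hc ↦ ?_⟩
  have two_mul_neg : 2 * β < 0 := mul_neg_of_pos_of_neg two_pos hβ
  obtain ⟨t, ht, ht_sq⟩ : ∃ t, 0 < t ∧ t ^ 2 < (c + β ^ 2 * R ^ 2) / (2 * β) :=
    exists_pos_pow_lt two_ne_zero (div_pos_of_neg_of_neg (by linarith) two_mul_neg)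
  calc c < 2 * β * t ^ 2 - β ^ 2 * R ^ 2 := by
        linarith [(lt_div_iff_of_neg' two_mul_neg).mp ht_sq]
    _ = lambda8NormSq R β (boostOrbit R t) := (lambda8NormSq_boostOrbit R β t).symm
    _ ≤ b := hb (Set.mem_image_of_mem _ (boostOrbit_mem_adsQuadric R ht.ne'))

theorem stmt_4_general (hR : R ≠ 0) (hβ : β < 0) :
    (∀ x ∈ adsQuadric R, lambda8NormSq R β x < -(β ^ 2 * R ^ 2)) ∧
      ((∀ x ∈ adsQuadric R, 1 + lambda8NormSq R β x < 0) ↔ β ^ 2 * R ^ 2 ≥ 1) := by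
  refine ⟨fun x hx ↦ lambda8NormSq_lt hR hβ hx, ?_⟩
  calc (∀ x ∈ adsQuadric R, 1 + lambda8NormSq R β x < 0)
      ↔ ∀ y ∈ lambda8NormSq R β '' adsQuadric R, y < -1 := by
        simp only [Set.forall_mem_image, lt_neg_iff_add_neg']
    _ ↔ -(β ^ 2 * R ^ 2) ≤ -1 :=
        forall_lt_iff_of_isLUB_of_notMem (isLUB_image_lambda8NormSq hR hβ)
          (notMem_image_lambda8NormSq hR hβ)
    _ ↔ β ^ 2 * R ^ 2 ≥ 1 := neg_le_neg_iff

end Field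

/-- On the AdS quadric `x₁² + x₂² − x₃² − x₄² − x₅² = R²` with `β < 0`:
(i) the λ₈-part `2β((x₁+x₄)² + (x₂+x₃)²) − β²(R² + x₅²)` of the squared norm of the
Killing vector `∂_y + λ₈` is everywhere strictly less than `−β²R²`; and
(ii) the squared norm `1 + 2β((x₁+x₄)² + (x₂+x₃)²) − β²(R² + x₅²)` is everywhere
negative if and only if `β²R² ≥ 1`. -/
theorem stmt_4 (R β : ℝ) (hR : 0 < R) (hβ : β < 0) :
    (∀ x₁ x₂ x₃ x₄ x₅ : ℝ, x₁ ^ 2 + x₂ ^ 2 - x₃ ^ 2 - x₄ ^ 2 - x₅ ^ 2 = R ^ 2 →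
      2 * β * ((x₁ + x₄) ^ 2 + (x₂ + x₃) ^ 2) - β ^ 2 * (R ^ 2 + x₅ ^ 2)
        < -(β ^ 2 * R ^ 2)) ∧
    ((∀ x₁ x₂ x₃ x₄ x₅ : ℝ, x₁ ^ 2 + x₂ ^ 2 - x₃ ^ 2 - x₄ ^ 2 - x₅ ^ 2 = R ^ 2 →
      1 + 2 * β * ((x₁ + x₄) ^ 2 + (x₂ + x₃) ^ 2) - β ^ 2 * (R ^ 2 + x₅ ^ 2) < 0) ↔
      β ^ 2 * R ^ 2 ≥ 1) := by
  simpa [adsQuadric, lambda8NormSq, ← add_sub_assoc, Fin.forall_fin_succ_pi] using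
    stmt_4_general hR.ne' hβ
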